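/- For all nonnegative integers a, b: H(a,b) = (π^(2b) · 2^(2a+3))/((2a+2)!(2b+1)!) · ∫₀^(π/2) x^(2a+2) (1 − 2x/π)^(2b+1) cot(x) dx, where H(a,b) = ζ(2^a, 3, 2^b). -/

import Mathlib

open Real

/-- `∑_{n < m₁ < ⋯ < m_b} 1/(m₁² ⋯ m_b²)`; equals `1` when `b = 0`. -/
noncomputable def zetaTail (b n : ℕ) : ℝ :=
  ∑' f : {f : Fin b → ℕ // StrictMono f ∧ ∀ i, n < f i}, ∏ i, 1 / ((f.1 i : ℝ)) ^ 2

/-- `∑_{0 < n₁ < ⋯ < n_a < n} 1/(n₁² ⋯ n_a²)`; equals `1` when `a = 0`. -/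
noncomputable def zetaHead (a n : ℕ) : ℝ :=
  ∑' f : {f : Fin a → ℕ // StrictMono f ∧ ∀ i, 0 < f i ∧ f i < n},
    ∏ i, 1 / ((f.1 i : ℝ)) ^ 2

/-- The multiple zeta value `ζ(2,…,2,3,2,…,2)` with `a` twos before the `3` and `b` after. -/
noncomputable def H (a b : ℕ) : ℝ :=
  ∑' n : ℕ+, (1 / (n : ℝ) ^ 3) * zetaHead a n * zetaTail b n

/-!
For `|x| < π / 2` the power `x ^ (2 * N) / (2 * N)!` expands in powers of `sin x ^ 2`;
differentiating twice gives a recurrence for the coefficients, and the sums `zetaHead` solve it. On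
the other side, integration by parts shows that the `2 * b`-th moment of `cos ^ (2 * n)` on
`[0, π / 2]`, divided by the zeroth one, obeys up to a factor the recurrence in `n` that peels off
the innermost index of `zetaTail b n`. Integrate the expansion of `x ^ (2 * a + 2)` term by term
against `(π / 2 - x) ^ (2 * b + 1) * cot x`: since `sin ^ (2 * m) * cot = sin ^ (2 * m - 1) * cos`,
the reflection `x ↦ π / 2 - x` and one integration by parts turn the `m`-th term into the `2 * b`-th
moment of `cos ^ (2 * m)`, hence into a multiple of `zetaHead a m * zetaTail b m / m ^ 3`.
-/

open Filter MeasureTheory Set Topology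

/-! ### Increasing tuples and nested sums -/

theorem hasSum_sigma_of_nonneg {ι : Type*} {κ : ι → Type*} {f : (Σ i, κ i) → ℝ} {g : ι → ℝ} {r : ℝ}
    (hf : ∀ p, 0 ≤ f p) (hfiber : ∀ i, HasSum (fun j => f ⟨i, j⟩) (g i)) (hg : HasSum g r) :
    HasSum f r := by
  refine HasSum.sigma_of_hasSum hg hfiber
    ((summable_sigma_of_nonneg hf).2 ⟨fun i => (hfiber i).summable, ?_⟩)
  simpa only [(hfiber _).tsum_eq] using hg.summable

theorem hasSum_Ioi_sub_of_tendsto_zero {f : ℕ → ℝ} (hf : Antitone f) (hlim : Tendsto f atTop (𝓝 0))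
    (n : ℕ) : HasSum (fun m : Ioi n => f (m - 1) - f m) (f n) := by
  refine (hasSum_subtype_iff_indicator (f := fun m => f (m - 1) - f m)).2 ?_
  have hzero : ∑ m ∈ Finset.range (n + 1), (Ioi n).indicator (fun m => f (m - 1) - f m) m = 0 :=
    Finset.sum_eq_zero fun m hm => indicator_of_notMem (by simpa [Nat.lt_succ_iff] using hm) _
  rw [← hasSum_nat_add_iff' (n + 1), hzero, sub_zero]
  have hterm (k : ℕ) : (Ioi n).indicator (fun m => f (m - 1) - f m) (k + (n + 1)) =
      f (n + k) - f (n + (k + 1)) := by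
    rw [indicator_of_mem (by grind)]
    congr 2 <;> lia
  simp only [hterm]
  refine (hasSum_iff_tendsto_nat_of_nonneg (fun k => sub_nonneg.2 (hf (by lia))) _).2 ?_
  simp only [Finset.sum_range_sub', add_zero]
  simpa [add_comm] using ((tendsto_add_atTop_iff_nat n).2 hlim).const_sub (f n)

section StrictMonoTuples

variable {α : Type*} [Preorder α]

/-- An increasing tuple of elements above `l` is its first entry followed by an increasing tuple of
elements above that entry; this removes the innermost index of `zetaTail`. -/
def strictMonoConsEquiv (k : ℕ) (l : α) :
    (Σ m : Ioi l, {f : Fin k → α // StrictMono f ∧ ∀ i, m < f i}) ≃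
      {f : Fin (k + 1) → α // StrictMono f ∧ ∀ i, l < f i} where
  toFun p := ⟨Fin.cons p.1 p.2.1, Fin.strictMono_cons.2 ⟨p.2.2.2, p.2.2.1⟩,
    Fin.forall_fin_succ.2 ⟨p.1.2, fun i => p.1.2.trans (p.2.2.2 i)⟩⟩
  invFun f := ⟨⟨f.1 0, f.2.2 0⟩, Fin.tail f.1, f.2.1.comp Fin.strictMono_succ,
    fun i => f.2.1 i.succ_pos⟩
  left_inv _ := rfl
  right_inv f := Subtype.ext (Fin.cons_self_tail f.1)

/-- An increasing tuple of elements strictly between `l` and `u` is an increasing tuple of elements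
strictly between `l` and `m` followed by its last entry `m`; this removes the outermost index of
`zetaHead`. -/
def strictMonoSnocEquiv (k : ℕ) (l u : α) :
    (Σ m : Ioo l u, {f : Fin k → α // StrictMono f ∧ ∀ i, l < f i ∧ f i < m}) ≃
      {f : Fin (k + 1) → α // StrictMono f ∧ ∀ i, l < f i ∧ f i < u} where
  toFun p := ⟨Fin.snoc (α := fun _ => α) p.2.1 p.1, by
      rw [← Fin.insertNth_last', Fin.strictMono_insertNth_iff]
      exact ⟨p.2.2.1, fun i _ => (p.2.2.2 i).2, fun i hi => absurd hi i.castSucc_lt_last.not_ge⟩,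
    Fin.forall_fin_succ'.2 (by
      simpa using ⟨fun i => ⟨(p.2.2.2 i).1, (p.2.2.2 i).2.trans p.1.2.2⟩, p.1.2⟩)⟩
  invFun f := ⟨⟨f.1 (Fin.last k), f.2.2 _⟩, Fin.init f.1, f.2.1.comp Fin.strictMono_castSucc,
    fun i => ⟨(f.2.2 _).1, f.2.1 i.castSucc_lt_last⟩⟩
  left_inv p := Sigma.subtype_ext (Subtype.ext (Fin.snoc_last (α := fun _ => α) ..))
    (Fin.init_snoc (α := fun _ => α) ..)
  right_inv f := Subtype.ext (Fin.snoc_init_self f.1)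

instance uniqueStrictMonoFinZero (P : (Fin 0 → α) → Fin 0 → Prop) :
    Unique {f : Fin 0 → α // StrictMono f ∧ ∀ i, P f i} where
  default := ⟨finZeroElim, Subsingleton.strictMono _, finZeroElim⟩
  uniq _ := Subsingleton.elim _ _

theorem finite_strictMono_Ioo [LocallyFiniteOrder α] (k : ℕ) (l u : α) :
    Finite {f : Fin k → α // StrictMono f ∧ ∀ i, l < f i ∧ f i < u} :=
  ((Set.Finite.pi' fun _ : Fin k => finite_Ioo l u).subset fun _ hf i => hf.2 i).to_subtype

end StrictMonoTuples

theorem zetaHead_zero (n : ℕ) : zetaHead 0 n = 1 := by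
  simp [zetaHead]

theorem zetaHead_succ (a n : ℕ) :
    zetaHead (a + 1) n = ∑ m ∈ Finset.range n, 1 / (m : ℝ) ^ 2 * zetaHead a m := by
  have := finite_strictMono_Ioo (α := ℕ)
  have hfin : Finite (Σ m : Ioo 0 n, {f : Fin a → ℕ // StrictMono f ∧ ∀ i, 0 < f i ∧ f i < m}) :=
    .of_equiv _ (strictMonoSnocEquiv a 0 n).symm
  have hsub : Finset.Ioo 0 n ⊆ Finset.range n := fun m hm =>
    Finset.mem_range.2 (Finset.mem_Ioo.1 hm).2
  calc zetaHead (a + 1) n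
      = ∑' m : Ioo 0 n, 1 / (m : ℝ) ^ 2 * zetaHead a m := by
        rw [zetaHead, ← (strictMonoSnocEquiv a 0 n).tsum_eq, Summable.of_finite.tsum_sigma]
        simp only [zetaHead, ← tsum_mul_left, Fin.prod_univ_castSucc, strictMonoSnocEquiv,
          Equiv.coe_fn_mk, Fin.snoc_castSucc, Fin.snoc_last, mul_comm]
    _ = ∑ m ∈ Finset.Ioo 0 n, 1 / (m : ℝ) ^ 2 * zetaHead a m := by
        rw [← Finset.coe_Ioo, Finset.tsum_subtype' _ fun m : ℕ => 1 / (m : ℝ) ^ 2 * zetaHead a m]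
    _ = ∑ m ∈ Finset.range n, 1 / (m : ℝ) ^ 2 * zetaHead a m := by
        refine Finset.sum_subset hsub fun m hm hm' => ?_
        obtain rfl : m = 0 := by grind
        simp

theorem zetaHead_nonneg (a n : ℕ) : 0 ≤ zetaHead a n :=
  tsum_nonneg fun _ => Finset.prod_nonneg fun _ _ => by positivity

theorem zetaHead_le (a n : ℕ) : zetaHead a n ≤ (π ^ 2 / 6) ^ a := by
  induction a generalizing n with
  | zero => simp [zetaHead_zero]
  | succ a ih =>
    calc zetaHead (a + 1) n
        = ∑ m ∈ Finset.range n, 1 / (m : ℝ) ^ 2 * zetaHead a m := zetaHead_succ a n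
      _ ≤ ∑ m ∈ Finset.range n, 1 / (m : ℝ) ^ 2 * (π ^ 2 / 6) ^ a := by gcongr; exact ih _
      _ = (∑ m ∈ Finset.range n, 1 / (m : ℝ) ^ 2) * (π ^ 2 / 6) ^ a := by rw [Finset.sum_mul]
      _ ≤ π ^ 2 / 6 * (π ^ 2 / 6) ^ a := by
        gcongr
        exact sum_le_hasSum _ (fun _ _ => by positivity) hasSum_zeta_two
      _ = (π ^ 2 / 6) ^ (a + 1) := (pow_succ' _ _).symm

/-! ### Moments of powers of the cosine -/

/-- The Wallis product `binom(2n, n) / 4ⁿ`, the mean value of `cos ^ (2 * n)`. -/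
noncomputable def wallisRatio (n : ℕ) : ℝ :=
  ∏ i ∈ Finset.range n, (2 * (i : ℝ) + 1) / (2 * i + 2)

theorem wallisRatio_pos (n : ℕ) : 0 < wallisRatio n :=
  Finset.prod_pos fun _ _ => by positivity

theorem wallisRatio_succ (n : ℕ) :
    wallisRatio (n + 1) = wallisRatio n * ((2 * n + 1) / (2 * n + 2)) :=
  Finset.prod_range_succ _ n

theorem inv_wallisRatio_le (n : ℕ) : (wallisRatio n)⁻¹ ≤ n + 1 := by
  induction n with
  | zero => simp [wallisRatio]
  | succ n ih =>
    have hfactor : ((2 * n + 1) / (2 * n + 2) : ℝ)⁻¹ ≤ (n + 2) / (n + 1) := by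
      rw [inv_div, div_le_div_iff₀ (by positivity) (by positivity)]
      nlinarith
    calc (wallisRatio (n + 1))⁻¹
        = (wallisRatio n)⁻¹ * ((2 * n + 1) / (2 * n + 2) : ℝ)⁻¹ := by
          rw [wallisRatio_succ, mul_inv]
      _ ≤ (n + 1) * ((n + 2) / (n + 1)) := by gcongr
      _ = (n + 1 : ℕ) + 1 := by push_cast; field_simp; ring

/-- The moments `∫ yᵏ cosᵐ y dy` over `[0, π/2]`; divided by those with `k = 0` they are, up to
constants, the tails of the multiple zeta series. -/
noncomputable def cosMoment (k m : ℕ) : ℝ :=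
  ∫ y in (0 : ℝ)..π / 2, y ^ k * cos y ^ m

theorem cosMoment_zero_two_mul (n : ℕ) : cosMoment 0 (2 * n) = π / 2 * wallisRatio n := by
  simp only [cosMoment, pow_zero, one_mul, EulerSine.integral_cos_pow_eq, integral_sin_pow_even,
    wallisRatio]
  ring

theorem cosMoment_zero_add_two (m : ℕ) :
    cosMoment 0 (m + 2) = (m + 1) / (m + 2) * cosMoment 0 m := by
  simp [cosMoment, integral_cos_pow]

theorem cosMoment_nonneg (k m : ℕ) : 0 ≤ cosMoment k m :=
  intervalIntegral.integral_nonneg (by positivity) fun y hy =>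
    mul_nonneg (pow_nonneg hy.1 k)
      (pow_nonneg (cos_nonneg_of_mem_Icc ⟨by linarith [hy.1, pi_pos], hy.2⟩) m)

theorem cosMoment_zero_pos (m : ℕ) : 0 < cosMoment 0 m := by
  simp only [cosMoment, pow_zero, one_mul, EulerSine.integral_cos_pow_eq]
  exact mul_pos one_half_pos (integral_sin_pow_pos m)

theorem hasDerivAt_cos_pow_mul_sin (m : ℕ) (y : ℝ) :
    HasDerivAt (fun y => cos y ^ (m + 1) * sin y)
      ((m + 2) * cos y ^ (m + 2) - (m + 1) * cos y ^ m) y := by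
  refine (((hasDerivAt_cos y).fun_pow (m + 1)).mul (hasDerivAt_sin y)).congr_deriv ?_
  rw [Nat.add_sub_cancel]
  push_cast
  linear_combination -((m : ℝ) + 1) * cos y ^ m * sin_sq_add_cos_sq y

theorem integral_pow_mul_cos_pow_mul_sin (k m : ℕ) :
    ∫ y in (0 : ℝ)..π / 2, y ^ (k + 1) * (cos y ^ m * sin y) =
      (k + 1) / (m + 1) * cosMoment k (m + 1) := by
  have hderiv (y : ℝ) : HasDerivAt (fun y => -cos y ^ (m + 1) / (m + 1)) (cos y ^ m * sin y) y := by
    refine (((hasDerivAt_cos y).fun_pow (m + 1)).fun_neg.div_const _).congr_deriv ?_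
    rw [Nat.add_sub_cancel]
    push_cast
    field
  rw [intervalIntegral.integral_mul_deriv_eq_deriv_mul (fun y _ => hasDerivAt_pow (k + 1) y)
    (fun y _ => hderiv y) (Continuous.intervalIntegrable (by fun_prop) _ _)
    (Continuous.intervalIntegrable (by fun_prop) _ _)]
  simp only [cos_pi_div_two, cosMoment, ← intervalIntegral.integral_const_mul,
    Nat.add_sub_cancel, Nat.cast_add, Nat.cast_one]
  rw [zero_pow m.succ_ne_zero, zero_pow k.succ_ne_zero, neg_zero, zero_div, mul_zero, zero_mul,
    sub_zero, zero_sub, ← intervalIntegral.integral_neg]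
  congr! 2 with y
  ring

theorem cosMoment_recurrence (k m : ℕ) :
    (m + 2) * ((m + 1) * cosMoment (k + 2) m - (m + 2) * cosMoment (k + 2) (m + 2)) =
      (k + 2) * (k + 1) * cosMoment k (m + 2) := by
  have hparts := intervalIntegral.integral_mul_deriv_eq_deriv_mul (a := 0) (b := π / 2)
    (fun y _ => hasDerivAt_pow (k + 2) y) (fun y _ => hasDerivAt_cos_pow_mul_sin m y)
    (Continuous.intervalIntegrable (by fun_prop) _ _)
    (Continuous.intervalIntegrable (by fun_prop) _ _)
  have hleft : ∫ y in (0 : ℝ)..π / 2,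
      y ^ (k + 2) * ((m + 2) * cos y ^ (m + 2) - (m + 1) * cos y ^ m) =
        (m + 2) * cosMoment (k + 2) (m + 2) - (m + 1) * cosMoment (k + 2) m := by
    simp only [cosMoment, ← intervalIntegral.integral_const_mul]
    rw [← intervalIntegral.integral_sub (Continuous.intervalIntegrable (by fun_prop) _ _)
      (Continuous.intervalIntegrable (by fun_prop) _ _)]
    congr! 2
    ring
  have hright : ∫ y in (0 : ℝ)..π / 2, ((k + 2 : ℕ) : ℝ) * y ^ (k + 1) *
      (cos y ^ (m + 1) * sin y) = (k + 2) * ((k + 1) / (m + 2) * cosMoment k (m + 2)) := by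
    have := integral_pow_mul_cos_pow_mul_sin k (m + 1)
    simp only [mul_assoc, intervalIntegral.integral_const_mul, this]
    push_cast
    ring
  rw [hleft, show k + 2 - 1 = k + 1 from rfl, hright] at hparts
  simp only [cos_pi_div_two, sin_zero, zero_pow m.succ_ne_zero, zero_mul, mul_zero, sub_zero,
    zero_sub] at hparts
  have hm : (m + 2 : ℝ) ≠ 0 := by positivity
  field_simp at hparts
  linear_combination -hparts

theorem le_pi_div_two_mul_sin {x : ℝ} (hx₀ : 0 ≤ x) (hx : x ≤ π / 2) : x ≤ π / 2 * sin x := by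
  have := mul_le_sin hx₀ hx
  field_simp at this ⊢
  linarith

theorem cosMoment_add_two_le (k m : ℕ) :
    cosMoment (k + 2) m ≤ (π / 2) ^ (k + 2) / (m + 2) * cosMoment 0 m := by
  have hdiff : (π / 2) ^ (k + 2) / (m + 2) * cosMoment 0 m =
      ∫ y in (0 : ℝ)..π / 2, (π / 2) ^ (k + 2) * (cos y ^ m - cos y ^ (m + 2)) := by
    rw [intervalIntegral.integral_const_mul,
      intervalIntegral.integral_sub (Continuous.intervalIntegrable (by fun_prop) _ _)
        (Continuous.intervalIntegrable (by fun_prop) _ _)]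
    have := cosMoment_zero_add_two m
    simp only [cosMoment, pow_zero, one_mul] at this ⊢
    rw [this]
    field
  rw [hdiff, cosMoment]
  refine intervalIntegral.integral_mono_on (by positivity)
    (Continuous.intervalIntegrable (by fun_prop) _ _)
    (Continuous.intervalIntegrable (by fun_prop) _ _) fun y ⟨hy₀, hy⟩ => ?_
  have hcos : 0 ≤ cos y := cos_nonneg_of_mem_Icc ⟨by linarith [pi_pos], hy⟩
  calc y ^ (k + 2) * cos y ^ m
      = y ^ k * y ^ 2 * cos y ^ m := by ring
    _ ≤ (π / 2) ^ k * (π / 2 * sin y) ^ 2 * cos y ^ m := by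
        gcongr
        exact le_pi_div_two_mul_sin hy₀ hy
    _ = (π / 2) ^ (k + 2) * (cos y ^ m - cos y ^ (m + 2)) := by rw [mul_pow, sin_sq]; ring

/-- The `2 * b`-th moment of the probability density proportional to `cos ^ (2 * n)` on `[0, π/2]`,
scaled so as to equal `zetaTail b n`. -/
noncomputable def normalizedCosMoment (b n : ℕ) : ℝ :=
  4 ^ b / (2 * b).factorial * (cosMoment (2 * b) (2 * n) / cosMoment 0 (2 * n))

theorem normalizedCosMoment_nonneg (b n : ℕ) : 0 ≤ normalizedCosMoment b n :=
  mul_nonneg (by positivity) (div_nonneg (cosMoment_nonneg _ _) (cosMoment_nonneg _ _))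

theorem normalizedCosMoment_zero (n : ℕ) : normalizedCosMoment 0 n = 1 := by
  simp [normalizedCosMoment, (cosMoment_zero_pos _).ne']

theorem normalizedCosMoment_sub_succ (b n : ℕ) :
    normalizedCosMoment (b + 1) n - normalizedCosMoment (b + 1) (n + 1) =
      1 / ((n + 1 : ℕ) : ℝ) ^ 2 * normalizedCosMoment b (n + 1) := by
  have hrec := cosMoment_recurrence (2 * b) (2 * n)
  have hpos := cosMoment_zero_pos (2 * n)
  simp only [normalizedCosMoment, mul_add_one, cosMoment_zero_add_two, Nat.factorial_succ]
  push_cast at hrec ⊢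
  field_simp
  linear_combination 2 * 4 ^ b * hrec

theorem antitone_normalizedCosMoment_succ (b : ℕ) : Antitone (normalizedCosMoment (b + 1)) :=
  antitone_nat_of_succ_le fun n => by
    rw [← sub_nonneg, normalizedCosMoment_sub_succ]
    exact mul_nonneg (by positivity) (normalizedCosMoment_nonneg _ _)

theorem tendsto_normalizedCosMoment_succ (b : ℕ) :
    Tendsto (normalizedCosMoment (b + 1)) atTop (𝓝 0) := by
  set C : ℝ := 4 ^ (b + 1) / (2 * (b + 1)).factorial * (π / 2) ^ (2 * (b + 1)) with hC
  have hlim : Tendsto (fun n : ℕ => C * (1 / ((n : ℝ) + 1))) atTop (𝓝 0) := by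
    simpa using tendsto_one_div_add_atTop_nhds_zero_nat.const_mul C
  refine squeeze_zero (normalizedCosMoment_nonneg _) (fun n => ?_) hlim
  have hmoment : cosMoment (2 * (b + 1)) (2 * n) / cosMoment 0 (2 * n) ≤
      (π / 2) ^ (2 * (b + 1)) * (1 / (n + 1)) := by
    rw [div_le_iff₀ (cosMoment_zero_pos _)]
    refine (cosMoment_add_two_le (2 * b) (2 * n)).trans ?_
    have := cosMoment_nonneg 0 (2 * n)
    rw [mul_one_div, mul_add_one 2 b]
    gcongr <;> linarith
  rw [hC, mul_assoc]
  exact mul_le_mul_of_nonneg_left hmoment (by positivity)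

theorem hasSum_normalizedCosMoment (b n : ℕ) :
    HasSum (fun m : Ioi n => 1 / (m : ℝ) ^ 2 * normalizedCosMoment b m)
      (normalizedCosMoment (b + 1) n) := by
  convert hasSum_Ioi_sub_of_tendsto_zero (antitone_normalizedCosMoment_succ b)
    (tendsto_normalizedCosMoment_succ b) n with m
  obtain ⟨k, hk⟩ := Nat.exists_eq_succ_of_ne_zero (Nat.ne_zero_of_lt m.2)
  rw [hk, Nat.succ_eq_add_one, Nat.add_sub_cancel, normalizedCosMoment_sub_succ]

theorem hasSum_zetaTail (b n : ℕ) :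
    HasSum (fun f : {f : Fin b → ℕ // StrictMono f ∧ ∀ i, n < f i} => ∏ i, 1 / (f.1 i : ℝ) ^ 2)
      (normalizedCosMoment b n) := by
  induction b generalizing n with
  | zero =>
    simp [normalizedCosMoment_zero]
  | succ b ih =>
    rw [← (strictMonoConsEquiv b n).hasSum_iff]
    refine hasSum_sigma_of_nonneg (fun p => Finset.prod_nonneg fun _ _ => by positivity)
      (fun m => ?_) (hasSum_normalizedCosMoment b n)
    simp only [Function.comp_apply, Fin.prod_univ_succ]
    exact (ih m).mul_left (1 / (m : ℝ) ^ 2)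

theorem zetaTail_eq_normalizedCosMoment (b n : ℕ) : zetaTail b n = normalizedCosMoment b n :=
  (hasSum_zetaTail b n).tsum_eq

/-! ### Even powers in powers of the sine -/

theorem mem_Icc_of_second_deriv_mem_Icc {f f' f'' : ℝ → ℝ} {X K : ℝ}
    (hf : ∀ x, HasDerivAt f (f' x) x) (hf' : ∀ x, HasDerivAt f' (f'' x) x) (hf₀ : f 0 = 0)
    (hf'₀ : f' 0 = 0) (hf'' : ∀ x ∈ Icc 0 X, f'' x ∈ Icc 0 K) {x : ℝ} (hx : x ∈ Icc 0 X) :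
    f x ∈ Icc 0 (K * (x ^ 2 / 2)) := by
  have le_of_deriv_le {g g' h h' : ℝ → ℝ} (hg : ∀ x, HasDerivAt g (g' x) x)
      (hh : ∀ x, HasDerivAt h (h' x) x) (h₀ : g 0 = 0 ∧ h 0 = 0)
      (hle : ∀ x ∈ Icc 0 X, g' x ≤ h' x) : ∀ x ∈ Icc 0 X, g x ≤ h x := fun _ hx =>
    image_le_of_deriv_right_le_deriv_boundary (fun y _ => (hg y).continuousAt.continuousWithinAt)
      (fun y _ => (hg y).hasDerivWithinAt) (h₀.1.trans h₀.2.symm).le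
      (fun y _ => (hh y).continuousAt.continuousWithinAt) (fun y _ => (hh y).hasDerivWithinAt)
      (fun y hy => hle y (Ico_subset_Icc_self hy)) hx
  have hzero (y : ℝ) : HasDerivAt (fun _ => (0 : ℝ)) 0 y := hasDerivAt_const y 0
  have hlinear (y : ℝ) : HasDerivAt (fun y => K * y) K y := by
    simpa using (hasDerivAt_id y).const_mul K
  have hquadratic (y : ℝ) : HasDerivAt (fun y => K * (y ^ 2 / 2)) (K * y) y := by
    simpa using ((hasDerivAt_pow 2 y).div_const 2).const_mul K
  have hf'_nonneg := le_of_deriv_le hzero hf' ⟨rfl, hf'₀⟩ fun y hy => (hf'' y hy).1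
  have hf'_le := le_of_deriv_le hf' hlinear ⟨hf'₀, mul_zero K⟩ fun y hy => (hf'' y hy).2
  exact ⟨le_of_deriv_le hzero hf ⟨rfl, hf₀⟩ hf'_nonneg x hx,
    le_of_deriv_le hf hquadratic ⟨hf₀, by simp⟩ hf'_le x hx⟩

theorem hasDerivAt_pow_div_factorial (n : ℕ) (x : ℝ) :
    HasDerivAt (fun x : ℝ => x ^ (n + 1) / (n + 1).factorial) (x ^ n / n.factorial) x := by
  refine ((hasDerivAt_pow (n + 1) x).div_const _).congr_deriv ?_
  rw [Nat.factorial_succ, Nat.add_sub_cancel]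
  push_cast
  field

theorem hasDerivAt_sin_pow_mul_cos (m : ℕ) (x : ℝ) :
    HasDerivAt (fun x => sin x ^ (m + 1) * cos x)
      ((m + 1) * sin x ^ m - (m + 2) * sin x ^ (m + 2)) x := by
  refine (((hasDerivAt_sin x).fun_pow (m + 1)).mul (hasDerivAt_cos x)).congr_deriv ?_
  rw [Nat.add_sub_cancel]
  push_cast
  linear_combination ((m : ℝ) + 1) * sin x ^ m * sin_sq_add_cos_sq x

section EvenSinPolynomial

variable (c : ℕ → ℝ) (M : ℕ) (x : ℝ)

theorem hasDerivAt_sum_sin_pow :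
    HasDerivAt (fun x => ∑ m ∈ Finset.range (M + 1), c m * sin x ^ (2 * m))
      (∑ m ∈ Finset.range M, c (m + 1) * (2 * m + 2) * (sin x ^ (2 * m + 1) * cos x)) x := by
  have hterm (m : ℕ) (_ : m ∈ Finset.range (M + 1)) : HasDerivAt (fun x => c m * sin x ^ (2 * m))
      (c m * ((2 * m : ℕ) * sin x ^ (2 * m - 1) * cos x)) x :=
    ((hasDerivAt_sin x).fun_pow (2 * m)).const_mul (c m)
  refine (HasDerivAt.fun_sum hterm).congr_deriv ?_
  rw [Finset.sum_range_succ']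
  simp only [mul_add_one, Nat.add_sub_assoc one_le_two]
  push_cast
  simp [mul_assoc]

theorem hasDerivAt_deriv_sum_sin_pow :
    HasDerivAt (fun x => ∑ m ∈ Finset.range M, c (m + 1) * (2 * m + 2) *
        (sin x ^ (2 * m + 1) * cos x))
      ((∑ m ∈ Finset.range (M + 1),
          ((2 * m + 2) * (2 * m + 1) * c (m + 1) - 4 * m ^ 2 * c m) * sin x ^ (2 * m)) -
        (2 * M + 2) * (2 * M + 1) * c (M + 1) * sin x ^ (2 * M)) x := by
  refine (HasDerivAt.fun_sum fun m _ => (hasDerivAt_sin_pow_mul_cos (2 * m) x).const_mul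
    (c (m + 1) * (2 * m + 2))).congr_deriv ?_
  induction M with
  | zero => simp
  | succ M ih =>
    rw [Finset.sum_range_succ, ih, Finset.sum_range_succ _ (M + 1)]
    push_cast
    ring

end EvenSinPolynomial

/-- The coefficient of `sin x ^ (2 * m)` in the expansion of `x ^ (2 * N) / (2 * N)!`. For
`0 < N` and `m = 0` the division by zero gives the correct value `0`. -/
noncomputable def sinPowCoeff : ℕ → ℕ → ℝ
  | 0, m => if m = 0 then 1 else 0
  | N + 1, m => zetaHead N m / (4 ^ (N + 1) * m ^ 2 * wallisRatio m)

theorem sinPowCoeff_nonneg (N m : ℕ) : 0 ≤ sinPowCoeff N m := by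
  cases N with
  | zero => unfold sinPowCoeff; positivity
  | succ N =>
    exact div_nonneg (zetaHead_nonneg N m) (mul_nonneg (by positivity) (wallisRatio_pos m).le)

theorem sinPowCoeff_succ_succ (N m : ℕ) :
    (2 * m + 2) * (2 * m + 1) * sinPowCoeff (N + 1) (m + 1) =
      zetaHead N (m + 1) / (4 ^ N * wallisRatio m) := by
  have := (wallisRatio_pos m).ne'
  simp only [sinPowCoeff, wallisRatio_succ]
  push_cast
  field

theorem sinPowCoeff_recurrence (N m : ℕ) :
    (2 * m + 2) * (2 * m + 1) * sinPowCoeff (N + 1) (m + 1) - 4 * m ^ 2 * sinPowCoeff (N + 1) m =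
      sinPowCoeff N m := by
  have hW := (wallisRatio_pos m).ne'
  rw [sinPowCoeff_succ_succ]
  rcases N with _ | N <;> rcases eq_or_ne m 0 with rfl | hm
  · simp [sinPowCoeff, zetaHead_zero, wallisRatio]
  · simp only [sinPowCoeff, zetaHead_zero, hm, if_false]
    field
  · simp [sinPowCoeff, zetaHead_succ]
  · rw [zetaHead_succ, Finset.sum_range_succ, ← zetaHead_succ]
    simp only [sinPowCoeff]
    field

/-- The remainder of the expansion of `x ^ (2 * N) / (2 * N)!` in powers of `sin x ^ 2`, truncated
after the power `M`. -/
noncomputable def sinPowRemainder (N M : ℕ) (x : ℝ) : ℝ :=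
  x ^ (2 * N) / (2 * N).factorial -
    ∑ m ∈ Finset.range (M + 1), sinPowCoeff N m * sin x ^ (2 * m)

theorem sinPowRemainder_zero (M : ℕ) (x : ℝ) : sinPowRemainder 0 M x = 0 := by
  simp [sinPowRemainder, sinPowCoeff]

theorem sinPowRemainder_succ_mem_Icc {N M : ℕ} {X K : ℝ}
    (hK : ∀ x ∈ Icc 0 X, sinPowRemainder N M x +
      zetaHead N (M + 1) / (4 ^ N * wallisRatio M) * sin x ^ (2 * M) ∈ Icc 0 K)
    {x : ℝ} (hx : x ∈ Icc 0 X) : sinPowRemainder (N + 1) M x ∈ Icc 0 (K * (x ^ 2 / 2)) := by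
  refine mem_Icc_of_second_deriv_mem_Icc
    (fun x => (hasDerivAt_pow_div_factorial (2 * N + 1) x).sub
      (hasDerivAt_sum_sin_pow (sinPowCoeff (N + 1)) M x))
    (fun x => (hasDerivAt_pow_div_factorial (2 * N) x).sub
      (hasDerivAt_deriv_sum_sin_pow (sinPowCoeff (N + 1)) M x))
    ?_ ?_ (fun x hx => ?_) hx
  · simp [Finset.sum_range_succ', sinPowCoeff]
  · simp
  · simp only [sinPowCoeff_recurrence]
    rw [sinPowCoeff_succ_succ, ← sub_add]
    exact hK x hx

theorem exists_sinPowRemainder_mem_Icc (N : ℕ) {X : ℝ} (hX : X ≤ π / 2) :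
    ∃ C : ℝ, ∀ M, ∀ x ∈ Icc 0 X,
      sinPowRemainder N M x ∈ Icc 0 (C * (sin X ^ (2 * M) / wallisRatio M)) := by
  induction N with
  | zero => exact ⟨0, fun M x _ => by simp [sinPowRemainder_zero]⟩
  | succ N ih =>
    obtain ⟨C, hC⟩ := ih
    set B : ℝ := (π ^ 2 / 6) ^ N / 4 ^ N with hB
    refine ⟨(C + B) * (X ^ 2 / 2), fun M x hx => ?_⟩
    have hW := wallisRatio_pos M
    set ε := sin X ^ (2 * M) / wallisRatio M with hε
    have hsecond : ∀ y ∈ Icc 0 X, sinPowRemainder N M y +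
        zetaHead N (M + 1) / (4 ^ N * wallisRatio M) * sin y ^ (2 * M) ∈ Icc 0 ((C + B) * ε) := by
      intro y hy
      have hhead := zetaHead_nonneg N (M + 1)
      have hsin : 0 ≤ sin y := sin_nonneg_of_nonneg_of_le_pi hy.1 (by linarith [pi_pos, hy.2])
      have hsin_le : sin y ≤ sin X :=
        sin_le_sin_of_le_of_le_pi_div_two (by linarith [pi_pos, hy.1]) hX hy.2
      have hlast : zetaHead N (M + 1) / (4 ^ N * wallisRatio M) * sin y ^ (2 * M) ≤ B * ε := by
        rw [hB, hε, div_mul_div_comm, div_mul_eq_mul_div]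
        gcongr
        exact zetaHead_le N (M + 1)
      exact ⟨add_nonneg (hC M y hy).1 (by positivity), by linarith [(hC M y hy).2]⟩
    have hmem := sinPowRemainder_succ_mem_Icc hsecond hx
    have hK : 0 ≤ (C + B) * ε := (hsecond x hx).1.trans (hsecond x hx).2
    refine ⟨hmem.1, hmem.2.trans ?_⟩
    calc (C + B) * ε * (x ^ 2 / 2)
        ≤ (C + B) * ε * (X ^ 2 / 2) := by gcongr; exacts [hx.1, hx.2]
      _ = (C + B) * (X ^ 2 / 2) * ε := by ring

theorem tendsto_pow_div_wallisRatio {r : ℝ} (hr₀ : 0 ≤ r) (hr : r < 1) :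
    Tendsto (fun n => r ^ n / wallisRatio n) atTop (𝓝 0) := by
  have hlim : Tendsto (fun n : ℕ => n * r ^ n + r ^ n) atTop (𝓝 0) := by
    simpa using (tendsto_self_mul_const_pow_of_lt_one hr₀ hr).add
      (tendsto_pow_atTop_nhds_zero_of_lt_one hr₀ hr)
  refine squeeze_zero (fun n => div_nonneg (pow_nonneg hr₀ n) (wallisRatio_pos n).le)
    (fun n => ?_) hlim
  rw [div_eq_inv_mul, ← add_one_mul]
  exact mul_le_mul_of_nonneg_right (inv_wallisRatio_le n) (pow_nonneg hr₀ n)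

theorem hasSum_sinPowCoeff_mul_sin_pow (N : ℕ) {x : ℝ} (hx : |x| < π / 2) :
    HasSum (fun m => sinPowCoeff N m * sin x ^ (2 * m)) (x ^ (2 * N) / (2 * N).factorial) := by
  wlog hx₀ : 0 ≤ x generalizing x
  · simpa [(even_two_mul _).neg_pow] using
      this (x := -x) (by rwa [abs_neg]) (neg_nonneg.2 (le_of_not_ge hx₀))
  rw [abs_of_nonneg hx₀] at hx
  obtain ⟨C, hC⟩ := exists_sinPowRemainder_mem_Icc N hx.le
  have hcos : 0 < cos x := cos_pos_of_mem_Ioo ⟨by linarith [pi_pos], hx⟩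
  have hε : Tendsto (fun M => C * (sin x ^ (2 * M) / wallisRatio M)) atTop (𝓝 0) := by
    simpa [pow_mul] using (tendsto_pow_div_wallisRatio (sq_nonneg (sin x))
      (by rw [sin_sq]; linarith [pow_pos hcos 2])).const_mul C
  have hremainder : Tendsto (fun M => sinPowRemainder N M x) atTop (𝓝 0) :=
    squeeze_zero (fun M => (hC M x ⟨hx₀, le_rfl⟩).1) (fun M => (hC M x ⟨hx₀, le_rfl⟩).2) hε
  have hnonneg (m : ℕ) : 0 ≤ sinPowCoeff N m * sin x ^ (2 * m) :=
    mul_nonneg (sinPowCoeff_nonneg N m) ((even_two_mul m).pow_nonneg _)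
  rw [hasSum_iff_tendsto_nat_of_nonneg hnonneg, ← tendsto_add_atTop_iff_nat 1]
  simpa [sinPowRemainder] using hremainder.const_sub (x ^ (2 * N) / (2 * N).factorial)

/-! ### Termwise integration -/

theorem hasSum_integral_sinPowCoeff_mul (N : ℕ) {g : ℝ → ℝ} (hg : Measurable g)
    (hg_nonneg : ∀ x ∈ Ioc 0 (π / 2), 0 ≤ g x)
    (hint : IntervalIntegrable (fun x => x ^ (2 * N) / (2 * N).factorial * g x) volume 0 (π / 2)) :
    HasSum (fun m => ∫ x in (0 : ℝ)..π / 2, sinPowCoeff N m * sin x ^ (2 * m) * g x)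
      (∫ x in (0 : ℝ)..π / 2, x ^ (2 * N) / (2 * N).factorial * g x) := by
  have hsum : ∀ᵐ x : ℝ, x ∈ uIoc 0 (π / 2) →
      HasSum (fun m => sinPowCoeff N m * sin x ^ (2 * m) * g x)
        (x ^ (2 * N) / (2 * N).factorial * g x) := by
    filter_upwards [Measure.ae_ne volume (π / 2)] with x hne hx
    rw [uIoc_of_le pi_div_two_pos.le] at hx
    refine (hasSum_sinPowCoeff_mul_sin_pow N ?_).mul_right (g x)
    rw [abs_of_pos hx.1]
    exact hx.2.lt_of_ne hne
  -- The summands are nonnegative, so they dominate themselves: the bound sums to the limit.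
  refine intervalIntegral.hasSum_integral_of_dominated_convergence
    (fun m x => sinPowCoeff N m * sin x ^ (2 * m) * g x) (fun m => by fun_prop)
    (fun m => .of_forall fun x hx => ?_) (hsum.mono fun x hx hmem => (hx hmem).summable) ?_ hsum
  · rw [uIoc_of_le pi_div_two_pos.le] at hx
    exact (norm_of_nonneg (mul_nonneg
      (mul_nonneg (sinPowCoeff_nonneg N m) ((even_two_mul m).pow_nonneg _)) (hg_nonneg x hx))).le
  · refine hint.congr_ae ((ae_restrict_iff' measurableSet_uIoc).2 ?_)
    exact hsum.mono fun x hx hmem => (hx hmem).tsum_eq.symm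

theorem measurable_cot : Measurable Real.cot := by
  simp only [funext Real.cot_eq_cos_div_sin]
  fun_prop

theorem cot_nonneg_of_mem_Ioc {x : ℝ} (hx : x ∈ Ioc 0 (π / 2)) : 0 ≤ Real.cot x := by
  rw [Real.cot_eq_cos_div_sin]
  exact div_nonneg (cos_nonneg_of_mem_Icc ⟨by linarith [hx.1, pi_pos], hx.2⟩)
    (sin_nonneg_of_nonneg_of_le_pi hx.1.le (by linarith [hx.2, pi_pos]))

theorem pow_add_two_mul_cot (k : ℕ) (x : ℝ) :
    x ^ (k + 2) * Real.cot x = x ^ (k + 1) * (cos x / sinc x) := by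
  rcases eq_or_ne x 0 with rfl | hx
  · simp
  · rw [Real.cot_eq_cos_div_sin, sinc_of_ne_zero hx]
    field

theorem sinc_ne_zero_of_mem_Ioo {x : ℝ} (hx : x ∈ Ioo (-π) π) : sinc x ≠ 0 := by
  rcases eq_or_ne x 0 with rfl | hne
  · simp
  · rw [sinc_of_ne_zero hne]
    exact div_ne_zero (mt (sin_eq_zero_iff_of_lt_of_lt hx.1 hx.2).1 hne) hne

theorem continuousOn_pow_add_two_mul_cot (k : ℕ) :
    ContinuousOn (fun x => x ^ (k + 2) * Real.cot x) (Ioo (-π) π) := by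
  simp only [pow_add_two_mul_cot]
  exact (continuousOn_pow _).mul (continuous_cos.continuousOn.div continuous_sinc.continuousOn
    fun x hx => sinc_ne_zero_of_mem_Ioo hx)

theorem hasSum_integral_sinPowCoeff_mul_cot (a k : ℕ) :
    HasSum (fun m => ∫ x in (0 : ℝ)..π / 2, sinPowCoeff (a + 1) m * sin x ^ (2 * m) *
        ((π / 2 - x) ^ k * Real.cot x))
      (∫ x in (0 : ℝ)..π / 2, x ^ (2 * a + 2) / (2 * a + 2).factorial *
        ((π / 2 - x) ^ k * Real.cot x)) := by
  refine hasSum_integral_sinPowCoeff_mul (a + 1)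
    (Measurable.mul (by fun_prop) measurable_cot)
    (fun x hx => mul_nonneg (pow_nonneg (sub_nonneg.2 hx.2) k) (cot_nonneg_of_mem_Ioc hx)) ?_
  have hcont : ContinuousOn (fun x => x ^ (2 * a + 2) * Real.cot x *
      ((π / 2 - x) ^ k / (2 * a + 2).factorial)) (Icc 0 (π / 2)) :=
    ((continuousOn_pow_add_two_mul_cot (2 * a)).mono (Icc_subset_Ioo (by linarith [pi_pos])
      (by linarith [pi_pos]))).mul (by fun_prop)
  refine (hcont.congr fun x _ => ?_).intervalIntegrable_of_Icc pi_div_two_pos.le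
  rw [mul_add_one]
  ring

theorem integral_pi_div_two_sub_pow_mul_sin_pow_mul_cos (k m : ℕ) :
    ∫ x in (0 : ℝ)..π / 2, (π / 2 - x) ^ (k + 1) * (sin x ^ m * cos x) =
      (k + 1) / (m + 1) * cosMoment k (m + 1) := by
  rw [← integral_pow_mul_cos_pow_mul_sin]
  simpa [cos_pi_div_two_sub, sin_pi_div_two_sub] using
    intervalIntegral.integral_comp_sub_left (a := 0) (b := π / 2)
      (fun y => y ^ (k + 1) * (cos y ^ m * sin y)) (π / 2)

theorem sin_pow_add_two_mul_cot (k : ℕ) (x : ℝ) :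
    sin x ^ (k + 2) * Real.cot x = sin x ^ (k + 1) * cos x := by
  rw [Real.cot_eq_cos_div_sin]
  rcases eq_or_ne (sin x) 0 with hx | hx
  · simp [hx]
  · field

theorem cosMoment_two_mul_two_mul (b n : ℕ) :
    cosMoment (2 * b) (2 * n) =
      (2 * b).factorial / 4 ^ b * (π / 2 * wallisRatio n) * zetaTail b n := by
  have := (cosMoment_zero_pos (2 * n)).ne'
  rw [zetaTail_eq_normalizedCosMoment, normalizedCosMoment, ← cosMoment_zero_two_mul]
  field

theorem integral_sinPowCoeff_mul_cot (a b m : ℕ) :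
    ∫ x in (0 : ℝ)..π / 2, sinPowCoeff (a + 1) m * sin x ^ (2 * m) *
        ((π / 2 - x) ^ (2 * b + 1) * Real.cot x) =
      (2 * b + 1).factorial * π / 4 ^ (a + b + 2) *
        (1 / m ^ 3 * zetaHead a m * zetaTail b m) := by
  rcases m with _ | n
  · simp [sinPowCoeff]
  have hintegrand (x : ℝ) : sinPowCoeff (a + 1) (n + 1) * sin x ^ (2 * (n + 1)) *
      ((π / 2 - x) ^ (2 * b + 1) * Real.cot x) = sinPowCoeff (a + 1) (n + 1) *
        ((π / 2 - x) ^ (2 * b + 1) * (sin x ^ (2 * n + 1) * cos x)) := by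
    rw [← sin_pow_add_two_mul_cot]
    ring
  have hW := (wallisRatio_pos (n + 1)).ne'
  have hmoment := cosMoment_two_mul_two_mul b (n + 1)
  simp only [hintegrand, intervalIntegral.integral_const_mul,
    integral_pi_div_two_sub_pow_mul_sin_pow_mul_cos]
  rw [show 2 * n + 1 + 1 = 2 * (n + 1) by ring, hmoment, sinPowCoeff, Nat.factorial_succ]
  push_cast
  field

theorem H_eq_tsum_nat (a b : ℕ) :
    H a b = ∑' m : ℕ, 1 / (m : ℝ) ^ 3 * zetaHead a m * zetaTail b m := by
  refine PNat.coe_injective.tsum_eq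
    (f := fun m : ℕ => 1 / (m : ℝ) ^ 3 * zetaHead a m * zetaTail b m) fun m hm => ?_
  rcases Nat.eq_zero_or_pos m with rfl | hpos
  · simp at hm
  · exact ⟨⟨m, hpos⟩, rfl⟩

theorem mul_H_eq_integral (a b : ℕ) :
    (2 * b + 1).factorial * π / 4 ^ (a + b + 2) * H a b =
      ∫ x in (0 : ℝ)..π / 2, x ^ (2 * a + 2) / (2 * a + 2).factorial *
        ((π / 2 - x) ^ (2 * b + 1) * Real.cot x) := by
  rw [H_eq_tsum_nat, ← tsum_mul_left, ← (hasSum_integral_sinPowCoeff_mul_cot a _).tsum_eq]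
  exact tsum_congr fun m => (integral_sinPowCoeff_mul_cot a b m).symm

theorem H_eq_cot_integral (a b : ℕ) :
    H a b = π ^ (2 * b) * 2 ^ (2 * a + 3) /
        ((Nat.factorial (2 * a + 2)) * (Nat.factorial (2 * b + 1))) *
      ∫ x in (0:ℝ)..(π / 2),
        x ^ (2 * a + 2) * (1 - 2 * x / π) ^ (2 * b + 1) * Real.cot x := by
  have hrescale (x : ℝ) : x ^ (2 * a + 2) / (2 * a + 2).factorial *
      ((π / 2 - x) ^ (2 * b + 1) * Real.cot x) = (π / 2) ^ (2 * b + 1) / (2 * a + 2).factorial *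
        (x ^ (2 * a + 2) * (1 - 2 * x / π) ^ (2 * b + 1) * Real.cot x) := by
    rw [show π / 2 - x = π / 2 * (1 - 2 * x / π) by field, mul_pow]
    ring
  have hH := mul_H_eq_integral a b
  simp only [hrescale, intervalIntegral.integral_const_mul] at hH
  refine mul_left_cancel₀ (show (2 * b + 1).factorial * π / 4 ^ (a + b + 2) ≠ 0 by positivity)
    (hH.trans ?_)
  rw [show (4 : ℝ) = 2 ^ 2 by norm_num, ← pow_mul, div_pow]
  field
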